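/- arXiv:q-alg/9512012 — 6 statements merged into one kernel-verified Lean document; each statement's English description precedes it below -/
import Mathlib

section
/- Let H be a complex Hilbert space and let F, G : H → H be bounded linear operators such that G is invertible with bounded inverse and G*G − F*F = 1, where * denotes the Hilbert-space adjoint. Then for every η ∈ H one has ‖F(G⁻¹η)‖² = ‖η‖² − ‖G⁻¹η‖², the operator norm satisfies ‖F ∘ G⁻¹‖² ≤ 1 − ‖G‖⁻², and in particular ‖F ∘ G⁻¹‖ < 1. -/
/-!
Pairing `G*G - F*F = 1` with `x` gives `‖G x‖² - ‖F x‖² = ‖x‖²`; at `x = G⁻¹ η` this is the norm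
identity. Since `‖η‖ = ‖G (G⁻¹ η)‖ ≤ ‖G‖ ‖G⁻¹ η‖`, the subtracted term is at least `‖G‖⁻² ‖η‖²`,
which bounds the operator norm of `F G⁻¹` uniformly away from `1`.
-/

open ContinuousLinearMap

/-- The zero-dimensional case of Lemma 2 of the paper: if `G*G - F*F = 1` and `G`
has a bounded inverse `Ginv`, then `‖F ∘ G⁻¹ η‖² = ‖η‖² - ‖G⁻¹ η‖²` for all `η`,
`‖F ∘ G⁻¹‖² ≤ 1 - ‖G‖⁻²`, and in particular `‖F ∘ G⁻¹‖ < 1`. -/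
theorem norm_M_lt_one {H : Type*} [NormedAddCommGroup H] [InnerProductSpace ℂ H]
    [CompleteSpace H] (F G Ginv : H →L[ℂ] H)
    (hG1 : G ∘L Ginv = 1) (hG2 : Ginv ∘L G = 1)
    (hFG : adjoint G ∘L G - adjoint F ∘L F = 1) :
    (∀ η : H, ‖F (Ginv η)‖ ^ 2 = ‖η‖ ^ 2 - ‖Ginv η‖ ^ 2) ∧
      ‖F ∘L Ginv‖ ^ 2 ≤ 1 - (‖G‖⁻¹) ^ 2 ∧ ‖F ∘L Ginv‖ < 1 := by
  have key : ∀ x : H, ‖G x‖ ^ 2 - ‖F x‖ ^ 2 = ‖x‖ ^ 2 := by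
    intro x
    have h : inner ℂ x ((adjoint G ∘L G - adjoint F ∘L F) x) = inner ℂ x x := by
      rw [hFG, one_apply_eq_self]
    rw [sub_apply, comp_apply, comp_apply, inner_sub_right, adjoint_inner_right,
      adjoint_inner_right, inner_self_eq_norm_sq_to_K, inner_self_eq_norm_sq_to_K,
      inner_self_eq_norm_sq_to_K] at h
    exact_mod_cast h
  have hGG : ∀ η : H, G (Ginv η) = η := fun η => DFunLike.congr_fun hG1 η
  have hM : ∀ η : H, ‖F (Ginv η)‖ ^ 2 = ‖η‖ ^ 2 - ‖Ginv η‖ ^ 2 := by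
    intro η
    have h := key (Ginv η)
    rw [hGG] at h
    linarith
  refine ⟨hM, ?_⟩
  -- On the zero space `‖G‖ = 0`, so the junk value `‖G‖⁻¹ = 0` has to be treated separately.
  rcases subsingleton_or_nontrivial H with hH | hH
  · have hF : F ∘L Ginv = 0 := Subsingleton.elim _ _
    have hG : G = 0 := Subsingleton.elim _ _
    simp [hF, hG]
  have hGpos : 0 < ‖G‖ := by
    rw [norm_pos_iff]
    rintro rfl
    obtain ⟨η, hη⟩ := exists_ne (0 : H)
    exact hη (by simpa using (hGG η).symm)
  have hbound : ∀ η : H, ‖F (Ginv η)‖ ^ 2 ≤ (1 - (‖G‖⁻¹) ^ 2) * ‖η‖ ^ 2 := by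
    intro η
    have h1 : ‖G‖⁻¹ * ‖η‖ ≤ ‖Ginv η‖ := by
      rw [inv_mul_le_iff₀ hGpos]
      simpa [hGG] using G.le_opNorm (Ginv η)
    have h2 : (‖G‖⁻¹ * ‖η‖) ^ 2 ≤ ‖Ginv η‖ ^ 2 := by gcongr
    rw [hM]
    linarith [mul_pow ‖G‖⁻¹ ‖η‖ 2]
  -- The constant is nonnegative because the bound holds at some nonzero vector.
  have hc : 0 ≤ 1 - (‖G‖⁻¹) ^ 2 := by
    obtain ⟨η, hη⟩ := exists_ne (0 : H)
    exact nonneg_of_mul_nonneg_left ((sq_nonneg _).trans (hbound η))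
      (pow_pos (norm_pos_iff.mpr hη) 2)
  have hsq : ‖F ∘L Ginv‖ ^ 2 ≤ 1 - (‖G‖⁻¹) ^ 2 := by
    rw [← Real.le_sqrt (norm_nonneg _) hc]
    refine opNorm_le_bound _ (Real.sqrt_nonneg _) fun η => ?_
    refine abs_le_of_sq_le_sq' ?_ (by positivity) |>.2
    rw [mul_pow, Real.sq_sqrt hc]
    exact hbound η
  refine ⟨hsq, ?_⟩
  have hinv : 0 < (‖G‖⁻¹) ^ 2 := by positivity
  nlinarith [norm_nonneg (F ∘L Ginv)]
end

section
/- Fix natural numbers k ≤ n and let L be the n×n complex diagonal matrix whose first k diagonal entries are 0 and whose remaining diagonal entries are 1. Let B, C be n×n complex matrices such that: (i) Bᵀ C = Cᵀ B; (ii) Cᴴ B − Bᴴ C = i·L; (iii) for every row index j and every column index a < k, the entries B(j,a) and C(j,a) are real. Set F = (C + iB)/√2 and G = (C − iB)/√2, and assume that G is invertible and that the k×k matrix V with entries V(a,b) = Σ_j conj(F(j,a))·F(j,b) (a, b < k) is invertible; put W = V⁻¹. Define the n×n matrix M by M(i,j) = (F·G⁻¹)(i,j) − Σ_{a,b<k}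 F(i,a)·W(a,b)·F(j,b). Then: (1) the operator norm of M (as an operator on Euclidean ℂⁿ) is strictly less than 1; and (2) Σ_j M(i,j)·G(j,a) = 0 for every i and every a < k (equivalently, by (iii), Σ_j M(i,j)·conj(F(j,a)) = 0). -/
open Matrix

/-!
Conditions on `(B, C)` turn into `Gᴴ G - Fᴴ F = L` and `Fᵀ G = Gᵀ F`.  Write `f`, `g` for the
`n × k` blocks of the first `k` columns of `F`, `G`; reality of those columns of `B`, `C` gives
`g = conj f`, hence `fᵀ g = gᵀ f = V`.  With `S = F G⁻¹` we have `S g = f`, so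
`M g = f - f V⁻¹ fᵀ g = 0`, which is the second claim (`germ_mul_eq_zero`).

For the norm bound, split `v = u + g c` with `u` orthogonal to the columns of `g`
(that is, `fᵀ u = 0`).  Then `M v = M u = S u`, and for `u = G y` one has
`‖S u‖² = ‖F y‖² = ‖G y‖² - ∑_{j ≥ k} |y_j|² ≤ ‖u‖²`.  Equality forces `y` to be supported on
the first `k` coordinates, so that `u` lies in the span of the columns of `g` and is therefore `0`.
Thus `‖M v‖ < ‖v‖` for all `v ≠ 0` (`germ_contract`), and compactness of the unit sphere
yields `‖M‖ < 1` (`opNorm_lt_one_of_strict`).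
-/

/-- In finite dimension a linear map that strictly shrinks every nonzero vector has
operator norm `< 1`, because the norm is attained on the compact unit sphere. -/
lemma opNorm_lt_one_of_strict {n : ℕ}
    (T : EuclideanSpace ℂ (Fin n) →L[ℂ] EuclideanSpace ℂ (Fin n))
    (h : ∀ v, v ≠ 0 → ‖T v‖ < ‖v‖) : ‖T‖ < 1 := by
  rcases (Metric.sphere (0 : EuclideanSpace ℂ (Fin n)) 1).eq_empty_or_nonempty with he | hne
  · have : ‖T‖ ≤ 0 := by
      refine ContinuousLinearMap.opNorm_le_of_unit_norm (𝕜 := ℂ) le_rfl fun x hx => ?_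
      have : x ∈ Metric.sphere (0 : EuclideanSpace ℂ (Fin n)) 1 := by simpa using hx
      simp [he] at this
    linarith
  · obtain ⟨x, hx, hmax⟩ := (isCompact_sphere (0 : EuclideanSpace ℂ (Fin n)) 1).exists_isMaxOn hne
      (T.continuous.norm.continuousOn)
    have hx1 : ‖x‖ = 1 := by simpa using hx
    have hle : ‖T‖ ≤ ‖T x‖ :=
      ContinuousLinearMap.opNorm_le_of_unit_norm (𝕜 := ℂ) (norm_nonneg _) fun y hy =>
        hmax (by simpa using hy)
    have hx0 : x ≠ 0 := by
      rintro rfl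
      simp at hx1
    have := h x hx0
    linarith

lemma star_dotProduct_eq_sum {m : ℕ} (v : Fin m → ℂ) :
    star v ⬝ᵥ v = ((∑ j, ‖v j‖ ^ 2 : ℝ) : ℂ) := by
  simp only [dotProduct, Pi.star_apply, Complex.ofReal_sum]
  refine Finset.sum_congr rfl fun j _ => ?_
  rw [Complex.star_def, Complex.conj_mul']
  push_cast
  rfl

/-- `star (A x) ⬝ᵥ (D y) = star x ⬝ᵥ (Aᴴ D y)`, the adjoint relation for matrices. -/
lemma star_mulVec_dotProduct {p q r : ℕ} (A : Matrix (Fin p) (Fin q) ℂ)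
    (D : Matrix (Fin p) (Fin r) ℂ) (x : Fin q → ℂ) (y : Fin r → ℂ) :
    star (A *ᵥ x) ⬝ᵥ (D *ᵥ y) = star x ⬝ᵥ ((Aᴴ * D) *ᵥ y) := by
  rw [star_mulVec, ← dotProduct_mulVec, mulVec_mulVec]

/-- The inclusion `ℂᵏ → ℂⁿ` onto the first `k` coordinates, as a matrix. -/
def inclMatrix {n k : ℕ} (hkn : k ≤ n) : Matrix (Fin n) (Fin k) ℂ :=
  (1 : Matrix (Fin n) (Fin n) ℂ).submatrix id (Fin.castLE hkn)

lemma mul_inclMatrix_apply {n k : ℕ} (hkn : k ≤ n) (A : Matrix (Fin n) (Fin n) ℂ) (i : Fin n)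
    (a : Fin k) : (A * inclMatrix hkn) i a = A i (Fin.castLE hkn a) := by
  simp [inclMatrix, mul_apply, one_apply]

lemma eq_inclMatrix_mulVec {n k : ℕ} (hkn : k ≤ n) (y : Fin n → ℂ)
    (hy : ∀ j : Fin n, ¬ (j : ℕ) < k → y j = 0) :
    y = inclMatrix hkn *ᵥ fun a => y (Fin.castLE hkn a) := by
  ext j
  simp only [inclMatrix, mulVec, dotProduct, submatrix_apply, one_apply, id]
  by_cases hj : (j : ℕ) < k
  · rw [Finset.sum_eq_single (⟨j, hj⟩ : Fin k)]
    · simp [Fin.castLE]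
    · intro b _ hb
      rw [if_neg, zero_mul]
      rintro rfl
      exact hb rfl
    · simp
  · rw [hy j hj, Finset.sum_eq_zero]
    intro a _
    rw [if_neg, zero_mul]
    rintro rfl
    exact hj a.2

/-- The matrix `M = F G⁻¹ - f V⁻¹ fᵀ` annihilates the columns of `g`. -/
lemma germ_mul_eq_zero {n k : ℕ} (F G : Matrix (Fin n) (Fin n) ℂ) (hG : IsUnit G)
    (E f g : Matrix (Fin n) (Fin k) ℂ) (hf : f = F * E) (hg : g = G * E)
    (V : Matrix (Fin k) (Fin k) ℂ) (hV : IsUnit V) (hfg : fᵀ * g = V) :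
    (F * G⁻¹ - f * V⁻¹ * fᵀ) * g = 0 := by
  have hGd := (Matrix.isUnit_iff_isUnit_det G).1 hG
  have hVd := (Matrix.isUnit_iff_isUnit_det V).1 hV
  have e1 : F * G⁻¹ * g = f := by
    rw [hg, hf, Matrix.mul_assoc, Matrix.nonsing_inv_mul_cancel_left _ _ hGd]
  rw [Matrix.sub_mul, e1, Matrix.mul_assoc (f * V⁻¹), hfg, Matrix.mul_assoc,
    Matrix.nonsing_inv_mul _ hVd, Matrix.mul_one, sub_self]

open scoped ComplexOrder in
/-- The matrix `M` strictly shrinks every nonzero vector. -/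
lemma germ_contract {n k : ℕ} (hkn : k ≤ n) (F G : Matrix (Fin n) (Fin n) ℂ) (hG : IsUnit G)
    (hFG : Gᴴ * G - Fᴴ * F =
      Matrix.diagonal fun j : Fin n => if (j : ℕ) < k then (0 : ℂ) else 1)
    (f g : Matrix (Fin n) (Fin k) ℂ) (hf : f = F * inclMatrix hkn) (hg : g = G * inclMatrix hkn)
    (hconj : gᴴ = fᵀ)
    (V : Matrix (Fin k) (Fin k) ℂ) (hV : IsUnit V) (hfg : fᵀ * g = V)
    (M : Matrix (Fin n) (Fin n) ℂ) (hM : M = F * G⁻¹ - f * V⁻¹ * fᵀ)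
    (v : Fin n → ℂ) (hv : v ≠ 0) : ∑ j, ‖(M *ᵥ v) j‖ ^ 2 < ∑ j, ‖v j‖ ^ 2 := by
  have hGd := (Matrix.isUnit_iff_isUnit_det G).1 hG
  have hVd := (Matrix.isUnit_iff_isUnit_det V).1 hV
  have hMg : M * g = 0 := by
    rw [hM]
    exact germ_mul_eq_zero F G hG _ f g hf hg V hV hfg
  -- the orthogonal decomposition `v = u + g c`
  set c : Fin k → ℂ := V⁻¹ *ᵥ (fᵀ *ᵥ v) with hc
  set u : Fin n → ℂ := v - g *ᵥ c with hu
  have hvu : v = u + g *ᵥ c := by simp [hu]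
  have hfu : fᵀ *ᵥ u = 0 := by
    rw [hu, mulVec_sub, mulVec_mulVec, hfg, hc, mulVec_mulVec, Matrix.mul_nonsing_inv _ hVd,
      one_mulVec, sub_self]
  have horth : ∀ d : Fin k → ℂ, star (g *ᵥ d) ⬝ᵥ u = 0 := fun d => by
    rw [star_mulVec, ← dotProduct_mulVec, hconj, hfu, dotProduct_zero]
  have horth' : ∀ d : Fin k → ℂ, star u ⬝ᵥ (g *ᵥ d) = 0 := fun d => by
    rw [star_dotProduct, horth, star_zero]
  have hpyth : ∑ j, ‖v j‖ ^ 2 = ∑ j, ‖u j‖ ^ 2 + ∑ j, ‖(g *ᵥ c) j‖ ^ 2 := by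
    have : star v ⬝ᵥ v = star u ⬝ᵥ u + star (g *ᵥ c) ⬝ᵥ (g *ᵥ c) := by
      rw [hvu, star_add, add_dotProduct, dotProduct_add, dotProduct_add, horth, horth']
      ring
    simp only [star_dotProduct_eq_sum] at this
    exact_mod_cast this
  set y : Fin n → ℂ := G⁻¹ *ᵥ u with hy
  have huy : u = G *ᵥ y := by
    rw [hy, mulVec_mulVec, Matrix.mul_nonsing_inv _ hGd, one_mulVec]
  have hMv : M *ᵥ v = F *ᵥ y := by
    rw [hvu, mulVec_add, mulVec_mulVec, hMg, zero_mulVec, add_zero, hM, sub_mulVec,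
      ← mulVec_mulVec u (f * V⁻¹), hfu, mulVec_zero, sub_zero, hy, mulVec_mulVec]
  clear_value y
  have hkey : ∑ j, ‖u j‖ ^ 2 = ∑ j, ‖(M *ᵥ v) j‖ ^ 2 +
      ∑ j : Fin n, (if (j : ℕ) < k then 0 else ‖y j‖ ^ 2) := by
    have e : star u ⬝ᵥ u - star (M *ᵥ v) ⬝ᵥ (M *ᵥ v) =
        ((∑ j : Fin n, (if (j : ℕ) < k then 0 else ‖y j‖ ^ 2) : ℝ) : ℂ) := by
      rw [huy, hMv, star_mulVec_dotProduct, star_mulVec_dotProduct, ← dotProduct_sub,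
        ← sub_mulVec, hFG, Complex.ofReal_sum]
      simp only [dotProduct, mulVec_diagonal, Pi.star_apply]
      refine Finset.sum_congr rfl fun j _ => ?_
      split_ifs
      · simp
      · rw [one_mul, Complex.star_def, Complex.conj_mul']
        push_cast
        rfl
    simp only [star_dotProduct_eq_sum] at e
    rw [sub_eq_iff_eq_add] at e
    rw [add_comm]
    exact_mod_cast e
  have hterm : ∀ j ∈ (Finset.univ : Finset (Fin n)),
      0 ≤ (if (j : ℕ) < k then 0 else ‖y j‖ ^ 2) := fun j _ => by
    split_ifs <;> positivity
  have hgc : 0 ≤ ∑ j, ‖(g *ᵥ c) j‖ ^ 2 := by positivity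
  rcases (Finset.sum_nonneg hterm).lt_or_eq with hpos | hzero
  · linarith
  -- here `y` lives on the first `k` coordinates, which forces `u = 0`
  · have hy0 : ∀ j : Fin n, ¬ (j : ℕ) < k → y j = 0 := fun j hj => by
      have := (Finset.sum_eq_zero_iff_of_nonneg hterm).1 hzero.symm j (Finset.mem_univ j)
      rw [if_neg hj] at this
      simpa using this
    have hu0 : u = 0 := by
      have e : u = g *ᵥ fun a => y (Fin.castLE hkn a) := by
        rw [hg, ← mulVec_mulVec, ← eq_inclMatrix_mulVec hkn y hy0, huy]
      have h0 : star u ⬝ᵥ u = 0 := (congrArg (star u ⬝ᵥ ·) e).trans (horth' _)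
      exact dotProduct_star_self_eq_zero.1 h0
    have hMv0 : M *ᵥ v = 0 := by
      rw [hMv, hy, hu0, mulVec_zero, mulVec_zero]
    have hvpos : 0 < ∑ j, ‖v j‖ ^ 2 := by
      obtain ⟨j, hj⟩ := Function.ne_iff.1 hv
      exact Finset.sum_pos' (fun _ _ => by positivity)
        ⟨j, Finset.mem_univ j, pow_pos (norm_pos_iff.2 hj) 2⟩
    simpa [hMv0] using hvpos

/-- Lemma 2 of the paper in finite dimension: the matrix `M` defined by formula (7)
from a complex germ `(B, C)` over a `k`-dimensional isotropic manifold satisfies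
`‖M‖ < 1` and `M · (∂φ*/∂τ_a) = 0` for the first `k` columns. -/
theorem lemma2_finite_dim {n k : ℕ} (hkn : k ≤ n)
    (B C L : Matrix (Fin n) (Fin n) ℂ)
    (hL : L = Matrix.diagonal fun j : Fin n => if (j : ℕ) < k then (0 : ℂ) else 1)
    (h1 : Bᵀ * C = Cᵀ * B)
    (h2 : Cᴴ * B - Bᴴ * C = Complex.I • L)
    (h3 : ∀ (j a : Fin n), (a : ℕ) < k → (B j a).im = 0 ∧ (C j a).im = 0)
    (F G : Matrix (Fin n) (Fin n) ℂ)
    (hF : F = ((Real.sqrt 2 : ℂ))⁻¹ • (C + Complex.I • B))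
    (hG : G = ((Real.sqrt 2 : ℂ))⁻¹ • (C - Complex.I • B))
    (hGinv : IsUnit G)
    (V : Matrix (Fin k) (Fin k) ℂ)
    (hV : V = Matrix.of fun a b =>
      ∑ j, (starRingEnd ℂ) (F j (Fin.castLE hkn a)) * F j (Fin.castLE hkn b))
    (hVinv : IsUnit V)
    (M : Matrix (Fin n) (Fin n) ℂ)
    (hM : M = Matrix.of fun i j => (F * G⁻¹) i j -
      ∑ a, ∑ b, F i (Fin.castLE hkn a) * V⁻¹ a b * F j (Fin.castLE hkn b)) :
    ‖Matrix.toEuclideanCLM (𝕜 := ℂ) M‖ < 1 ∧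
      ∀ (i : Fin n) (a : Fin k), ∑ j, M i j * G j (Fin.castLE hkn a) = 0 := by
  have hs : ((Real.sqrt 2 : ℂ))⁻¹ * ((Real.sqrt 2 : ℂ))⁻¹ = 2⁻¹ := by
    rw [← mul_inv, ← Complex.ofReal_mul, Real.mul_self_sqrt (by norm_num)]
    norm_num
  have hsc : star ((Real.sqrt 2 : ℂ))⁻¹ = ((Real.sqrt 2 : ℂ))⁻¹ := by
    rw [Complex.star_def, map_inv₀, Complex.conj_ofReal]
  have hsym : Fᵀ * G = Gᵀ * F := by
    rw [hF, hG]
    simp only [transpose_smul, transpose_add, transpose_sub, smul_mul_smul_comm, hs,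
      Matrix.add_mul, Matrix.sub_mul, Matrix.mul_add, Matrix.mul_sub, Matrix.smul_mul,
      Matrix.mul_smul, h1]
    module
  have hdiff : Gᴴ * G - Fᴴ * F = L := by
    have e : Gᴴ * G - Fᴴ * F = -Complex.I • (Cᴴ * B - Bᴴ * C) := by
      rw [hF, hG]
      simp only [conjTranspose_smul, conjTranspose_add, conjTranspose_sub, smul_mul_smul_comm, hsc,
        hs, Matrix.add_mul, Matrix.sub_mul, Matrix.mul_add, Matrix.mul_sub, Matrix.smul_mul,
        Matrix.mul_smul, Complex.star_def, Complex.conj_I]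
      module
    rw [e, h2, smul_smul]
    simp
  set f := F * inclMatrix hkn with hf
  set g := G * inclMatrix hkn with hg
  have hGF : ∀ (j : Fin n) (a : Fin k),
      star (G j (Fin.castLE hkn a)) = F j (Fin.castLE hkn a) := fun j a => by
    obtain ⟨hb, hc⟩ := h3 j (Fin.castLE hkn a) a.2
    have hb' := Complex.conj_eq_iff_im.2 hb
    have hc' := Complex.conj_eq_iff_im.2 hc
    rw [hF, hG]
    simp only [Matrix.smul_apply, Matrix.add_apply, Matrix.sub_apply, smul_eq_mul, star_mul', hsc, star_sub]
    simp only [Complex.star_def, hb', hc', Complex.conj_I]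
    ring
  have hconj : gᴴ = fᵀ := by
    ext a j
    rw [conjTranspose_apply, transpose_apply, hg, hf, mul_inclMatrix_apply, mul_inclMatrix_apply,
      hGF]
  have hfg : fᵀ * g = V := by
    have e1 : fᵀ * g = gᵀ * f := by
      rw [hf, hg, transpose_mul, transpose_mul, Matrix.mul_assoc, Matrix.mul_assoc,
        ← Matrix.mul_assoc Fᵀ, hsym, Matrix.mul_assoc Gᵀ]
    rw [e1, hV]
    ext a b
    simp only [mul_apply (M := gᵀ), transpose_apply, of_apply]
    refine Finset.sum_congr rfl fun j _ => ?_
    rw [hg, hf, mul_inclMatrix_apply, mul_inclMatrix_apply, ← hGF j a, Complex.star_def,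
      Complex.conj_conj]
  have hM' : M = F * G⁻¹ - f * V⁻¹ * fᵀ := by
    rw [hM]
    ext i j
    simp only [of_apply, Matrix.sub_apply]
    congr 1
    rw [mul_apply, Finset.sum_comm]
    refine Finset.sum_congr rfl fun b _ => ?_
    rw [mul_apply, Finset.sum_mul, transpose_apply, hf]
    simp only [mul_inclMatrix_apply]
  refine ⟨opNorm_lt_one_of_strict _ fun v hv => ?_, fun i a => ?_⟩
  · have hv' : v.ofLp ≠ 0 := fun h => hv (by ext j; simp [h])
    have := germ_contract hkn F G hGinv (hdiff.trans hL) f g hf hg hconj V hVinv hfg M hM'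
      v.ofLp hv'
    rw [← sq_lt_sq₀ (norm_nonneg _) (norm_nonneg _), EuclideanSpace.norm_sq_eq,
      EuclideanSpace.norm_sq_eq]
    simpa using this
  · have := congrFun (congrFun (germ_mul_eq_zero F G hGinv _ f g hf hg V hVinv hfg) i) a
    rw [← hM', mul_apply] at this
    simpa [hg, mul_inclMatrix_apply] using this
end

section
/- Let H be a complex Hilbert space. Let A, D : ℝ → B(H) be families of bounded self-adjoint operators, B : ℝ → B(H) a family of bounded operators, and Π, Ω : ℝ → B(H) families of bounded operators that are differentiable in operator norm, with Π(0) = 1, Ω(0) = 0, and satisfying for every t the equations Π′(t) = i·(A(t)∘Π(t) + B(t)∘Ω(t)) and Ω′(t) = −i·(B(t)*∘Π(t) + D(t)∘Ω(t)). Then Π(t)*∘Π(t) − Ω(t)*∘Ω(t) = 1 for all t ∈ ℝ. -/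
open ContinuousLinearMap

/-- The first canonical relation (24) from the proof of Lemma 4 of the paper:
solutions of the equations in variations satisfy `Π*Π - Ω*Ω = 1` at all times. -/
theorem canonical_relation_one {H : Type*} [NormedAddCommGroup H]
    [InnerProductSpace ℂ H] [CompleteSpace H]
    (A B D Pi Om : ℝ → H →L[ℂ] H)
    (hA : ∀ t, IsSelfAdjoint (A t)) (hD : ∀ t, IsSelfAdjoint (D t))
    (hPi0 : Pi 0 = 1) (hOm0 : Om 0 = 0)
    (hPi : ∀ t : ℝ, HasDerivAt Pi (Complex.I • (A t ∘L Pi t + B t ∘L Om t)) t)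
    (hOm : ∀ t : ℝ,
      HasDerivAt Om (-(Complex.I • (adjoint (B t) ∘L Pi t + D t ∘L Om t))) t) :
    ∀ t : ℝ, adjoint (Pi t) ∘L Pi t - adjoint (Om t) ∘L Om t = 1 := by
  intro t
  simp only [← star_eq_adjoint, ← mul_def] at hPi hOm ⊢
  -- The `A` and `D` terms cancel by self-adjointness within each product, and the `B` terms
  -- cancel between the two products, so `Π*Π - Ω*Ω` has zero derivative.
  have hderiv : ∀ s : ℝ, HasDerivAt (fun s => star (Pi s) * Pi s - star (Om s) * Om s) 0 s := by
    intro s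
    refine (((hPi s).star.mul (hPi s)).sub ((hOm s).star.mul (hOm s))).congr_deriv ?_
    simp only [star_smul, star_add, star_mul, star_neg, star_star, (hA s).star_eq, (hD s).star_eq,
      Complex.star_def, Complex.conj_I, smul_mul_assoc, mul_smul_comm, neg_smul, neg_mul, mul_neg,
      smul_add, add_mul, mul_add, mul_assoc]
    abel
  have hconst := is_const_of_deriv_eq_zero (fun s => (hderiv s).differentiableAt)
    (fun s => (hderiv s).deriv) t 0
  simpa [hPi0, hOm0] using hconst
end

section
/- Fix n ∈ ℕ. Let K, P : ℝ → M_n(ℂ) be families of n×n complex matrices such that for every t, K(t) is Hermitian (K(t)ᴴ = K(t)) and P(t) is symmetric (P(t)ᵀ = P(t)). Let Π, Ω : ℝ → M_n(ℂ) be differentiable with Π(0) = 1, Ω(0) = 0, and for every t: Π′(t) = i·(K(t)·Π(t) + P(t)·Ω(t)) and Ω′(t) = −i·(conj(P(t))·Π(t) + K(t)ᵀ·Ω(t)). Then for all t: (1) Π(t)ᴴ·Π(t) − Ω(t)ᴴ·Ω(t) = 1; (2) Ω(t)ᵀ·Π(t) = Π(t)ᵀ·Ω(t); (3) Π(t)·Π(t)ᴴ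 − conj(Ω(t))·Ω(t)ᵀ = 1; (4) Ω(t)·Π(t)ᴴ = conj(Π(t))·Ω(t)ᵀ. -/
/-!
Both `Πᴴ Π - Ωᴴ Ω` and `Ωᵀ Π - Πᵀ Ω` have zero derivative by the linear system, since `K` is
Hermitian and `P` symmetric; so they keep their initial values `1` and `0`. These two relations
and their complex conjugates say that the block matrix `[[Πᴴ, -Ωᴴ], [-Ωᵀ, Πᵀ]]` is a left inverse
of `[[Π, conj Ω], [Ω, conj Π]]`. For square matrices a left inverse is a right inverse, and the
first block column of that identity is the remaining pair of relations.
-/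

open Matrix

/-- Entrywise derivative of a matrix-valued curve; no matrix norm has to be chosen. -/
def EntryDeriv {n : ℕ} (A : ℝ → Matrix (Fin n) (Fin n) ℂ) (A' : Matrix (Fin n) (Fin n) ℂ)
    (t : ℝ) : Prop :=
  ∀ i j, HasDerivAt (fun s => A s i j) (A' i j) t

namespace EntryDeriv

variable {n : ℕ} {A B : ℝ → Matrix (Fin n) (Fin n) ℂ} {A' B' : Matrix (Fin n) (Fin n) ℂ} {t : ℝ}

theorem mul (hA : EntryDeriv A A' t) (hB : EntryDeriv B B' t) :
    EntryDeriv (fun s => A s * B s) (A' * B t + A t * B') t := by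
  intro i j
  simp only [Matrix.mul_apply, Matrix.add_apply, ← Finset.sum_add_distrib]
  exact HasDerivAt.fun_sum fun k _ => (hA i k).mul (hB k j)

theorem sub (hA : EntryDeriv A A' t) (hB : EntryDeriv B B' t) :
    EntryDeriv (fun s => A s - B s) (A' - B') t :=
  fun i j => (hA i j).sub (hB i j)

theorem transpose (hA : EntryDeriv A A' t) : EntryDeriv (fun s => (A s)ᵀ) A'ᵀ t :=
  fun i j => hA j i

theorem conjTranspose (hA : EntryDeriv A A' t) : EntryDeriv (fun s => (A s)ᴴ) A'ᴴ t :=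
  fun i j => (hA j i).star

theorem eq_initial_of_zero (h : ∀ t, EntryDeriv A 0 t) (t : ℝ) : A t = A 0 := by
  ext i j
  exact is_const_of_deriv_eq_zero (fun s => (h s i j).differentiableAt)
    (fun s => (h s i j).deriv) t 0

end EntryDeriv

/-- The first two canonical relations imply the other two, by passing from a left inverse of
`[[X, conj Y], [Y, conj X]]` to a right inverse. -/
theorem canonical_right_of_left {n : ℕ} (X Y : Matrix (Fin n) (Fin n) ℂ)
    (h1 : Xᴴ * X - Yᴴ * Y = 1) (h2 : Yᵀ * X = Xᵀ * Y) :
    X * Xᴴ - Y.map (starRingEnd ℂ) * Yᵀ = 1 ∧ Y * Xᴴ = X.map (starRingEnd ℂ) * Yᵀ := by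
  have hmap : ∀ Z : Matrix (Fin n) (Fin n) ℂ,
      (Zᴴ).map (starRingEnd ℂ) = Zᵀ ∧ (Zᵀ).map (starRingEnd ℂ) = Zᴴ := fun Z =>
    ⟨by ext; simp, by ext; simp⟩
  have h1c : Xᵀ * X.map (starRingEnd ℂ) - Yᵀ * Y.map (starRingEnd ℂ) = 1 := by
    have := congrArg (fun Z => (starRingEnd ℂ).mapMatrix Z) h1
    simpa only [map_sub, map_mul, map_one, RingHom.mapMatrix_apply, (hmap _).1] using this
  have h2c : Yᴴ * X.map (starRingEnd ℂ) = Xᴴ * Y.map (starRingEnd ℂ) := by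
    have := congrArg (fun Z => (starRingEnd ℂ).mapMatrix Z) h2
    simpa only [map_mul, RingHom.mapMatrix_apply, (hmap _).2] using this
  have hL : fromBlocks Xᴴ (-Yᴴ) (-Yᵀ) Xᵀ *
      fromBlocks X (Y.map (starRingEnd ℂ)) Y (X.map (starRingEnd ℂ)) = 1 := by
    rw [fromBlocks_multiply, ← fromBlocks_one]
    congr 1
    · rw [← h1]; noncomm_ring
    · rw [Matrix.neg_mul, h2c, add_neg_cancel]
    · rw [Matrix.neg_mul, h2, neg_add_cancel]
    · rw [← h1c]; noncomm_ring
  have hR := mul_eq_one_comm.mp hL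
  rw [fromBlocks_multiply, ← fromBlocks_one, fromBlocks_inj] at hR
  obtain ⟨e1, -, e3, -⟩ := hR
  refine ⟨?_, ?_⟩
  · rw [← e1]; noncomm_ring
  · rw [← sub_eq_zero, ← e3]; noncomm_ring

/-- The four canonical relations (24) of the paper: the solution `(Π, Ω)` of the
equations in variations (22), with `K(t)` Hermitian and `P(t)` symmetric, is at
each time the matrix of a proper canonical transformation in the sense of Berezin. -/
theorem proper_canonical_relations {n : ℕ}
    (K P Pi Om : ℝ → Matrix (Fin n) (Fin n) ℂ)
    (hK : ∀ t, (K t)ᴴ = K t) (hP : ∀ t, (P t)ᵀ = P t)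
    (hPi0 : Pi 0 = 1) (hOm0 : Om 0 = 0)
    (hPi : ∀ (t : ℝ) (i j : Fin n),
      HasDerivAt (fun s => Pi s i j) ((Complex.I • (K t * Pi t + P t * Om t)) i j) t)
    (hOm : ∀ (t : ℝ) (i j : Fin n),
      HasDerivAt (fun s => Om s i j)
        ((-(Complex.I • ((P t).map (starRingEnd ℂ) * Pi t + (K t)ᵀ * Om t))) i j) t) :
    ∀ t : ℝ,
      (Pi t)ᴴ * Pi t - (Om t)ᴴ * Om t = 1 ∧
      (Om t)ᵀ * Pi t = (Pi t)ᵀ * Om t ∧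
      Pi t * (Pi t)ᴴ - (Om t).map (starRingEnd ℂ) * (Om t)ᵀ = 1 ∧
      Om t * (Pi t)ᴴ = (Pi t).map (starRingEnd ℂ) * (Om t)ᵀ := by
  have dPi : ∀ t, EntryDeriv Pi (Complex.I • (K t * Pi t + P t * Om t)) t := hPi
  have dOm : ∀ t, EntryDeriv Om
      (-(Complex.I • ((P t).map (starRingEnd ℂ) * Pi t + (K t)ᵀ * Om t))) t := hOm
  have hPH : ∀ t, (P t)ᴴ = (P t).map (starRingEnd ℂ) := fun t => by
    conv_lhs => rw [← hP t]
    ext; simp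
  have hPbT : ∀ t, ((P t).map (starRingEnd ℂ))ᵀ = (P t).map (starRingEnd ℂ) := fun t => by
    rw [← Matrix.transpose_map, hP]
  have hPbH : ∀ t, ((P t).map (starRingEnd ℂ))ᴴ = P t := fun t => by
    rw [← hPH, conjTranspose_conjTranspose]
  have hKTH : ∀ t, ((K t)ᵀ)ᴴ = (K t)ᵀ := fun t => by
    conv_rhs => rw [← hK t]
    ext; simp
  have c1 : ∀ t, (Pi t)ᴴ * Pi t - (Om t)ᴴ * Om t = 1 := fun t => by
    have := EntryDeriv.eq_initial_of_zero (A := fun s => (Pi s)ᴴ * Pi s - (Om s)ᴴ * Om s) (fun t => by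
      convert ((dPi t).conjTranspose.mul (dPi t)).sub ((dOm t).conjTranspose.mul (dOm t)) using 1
      simp only [conjTranspose_smul, conjTranspose_add, conjTranspose_mul, conjTranspose_neg,
        hK, hPH, hPbH, hKTH, Complex.star_def, Complex.conj_I, Matrix.smul_mul, Matrix.mul_smul,
        Matrix.add_mul, Matrix.mul_add, Matrix.neg_mul, Matrix.mul_neg, Matrix.mul_assoc]
      module) t
    simpa [hPi0, hOm0] using this
  have c2 : ∀ t, (Om t)ᵀ * Pi t = (Pi t)ᵀ * Om t := fun t => by
    have := EntryDeriv.eq_initial_of_zero (A := fun s => (Om s)ᵀ * Pi s - (Pi s)ᵀ * Om s) (fun t => by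
      convert ((dOm t).transpose.mul (dPi t)).sub ((dPi t).transpose.mul (dOm t)) using 1
      simp only [transpose_smul, transpose_add, transpose_mul, transpose_neg, transpose_transpose,
        hP, hPbT, Matrix.smul_mul, Matrix.mul_smul,
        Matrix.add_mul, Matrix.mul_add, Matrix.neg_mul, Matrix.mul_neg, Matrix.mul_assoc]
      module) t
    rw [← sub_eq_zero]
    simpa [hPi0, hOm0] using this
  exact fun t => ⟨c1 t, c2 t, canonical_right_of_left _ _ (c1 t) (c2 t)⟩
end

section
/- Let Π, Ω be n×n complex matrices satisfying ΠᴴΠ − ΩᴴΩ = 1 and ΠΠᴴ − conj(Ω)·Ωᵀ = 1. Then Π is invertible; the operator norm of Π⁻¹ on Euclidean ℂⁿ is at most 1; and the operator norm of Π⁻¹·conj(Ω) on Euclidean ℂⁿ is strictly less than 1. -/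
/-!
Since `ΠᴴΠ = 1 + ΩᴴΩ` is positive definite, `Π` is invertible. Put `T = Π⁻¹ Ω̄` and `K = Π⁻¹`.
Conjugating the second identity by `Π⁻¹` gives `T Tᴴ + K Kᴴ = 1`, that is,
`‖Tᴴ x‖² + ‖Kᴴ x‖² = ‖x‖²` for all `x`. Hence `‖K‖ = ‖Kᴴ‖ ≤ 1`. As `Kᴴ` has the bounded left
inverse `Πᴴ`, it is bounded below, so `‖Tᴴ x‖² ≤ (1 - c⁻²) ‖x‖²` for a finite constant `c`, and
`‖T‖ = ‖Tᴴ‖ < 1`.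
-/

open Matrix
open scoped ComplexOrder

/-- If `‖A x‖² + ‖B x‖² = ‖x‖²` and `B` has a bounded left inverse, then `B` is a contraction
and `A` is a strict contraction. -/
lemma contraction_of_sq_add_sq {E : Type*} [NormedAddCommGroup E] [NormedSpace ℂ E]
    (A B C : E →L[ℂ] E) (h : ∀ x, ‖A x‖ ^ 2 + ‖B x‖ ^ 2 = ‖x‖ ^ 2)
    (hC : ∀ x, C (B x) = x) : ‖B‖ ≤ 1 ∧ ‖A‖ < 1 := by
  constructor
  · refine B.opNorm_le_bound zero_le_one fun x => ?_
    rw [one_mul]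
    exact le_of_sq_le_sq (by nlinarith [h x, sq_nonneg ‖A x‖]) (norm_nonneg x)
  · -- The summand `1` keeps the constant at least `1`, even when `C = 0` on a trivial space.
    set c : ℝ := ‖C‖ + 1 with hc
    have hc1 : 1 ≤ c := by linarith [norm_nonneg C]
    have hc0 : 0 < c := by linarith
    have hinv : 0 < (c ^ 2)⁻¹ := by positivity
    have hinv1 : (c ^ 2)⁻¹ ≤ 1 := inv_le_one_of_one_le₀ (by nlinarith)
    have hbound : ‖A‖ ≤ √(1 - (c ^ 2)⁻¹) := by
      refine A.opNorm_le_bound (Real.sqrt_nonneg _) fun x => ?_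
      have h3 : ‖x‖ ≤ c * ‖B x‖ := by
        calc ‖x‖ = ‖C (B x)‖ := by rw [hC]
          _ ≤ ‖C‖ * ‖B x‖ := C.le_opNorm _
          _ ≤ c * ‖B x‖ := by gcongr; linarith
      have h4 : (c ^ 2)⁻¹ * ‖x‖ ^ 2 ≤ ‖B x‖ ^ 2 := by
        rw [inv_mul_le_iff₀ (by positivity), ← mul_pow]
        gcongr
      refine le_of_sq_le_sq ?_ (by positivity)
      rw [mul_pow, Real.sq_sqrt (by linarith)]
      linarith [h x]
    refine hbound.trans_lt ?_
    rw [Real.sqrt_lt' one_pos]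
    linarith

/-- Berezin's properties of a proper canonical transformation, used in the proof of
Lemma 4 of the paper: if `ΠᴴΠ - ΩᴴΩ = 1` and `ΠΠᴴ - Ω̄Ωᵀ = 1`, then `Π` is
invertible, `‖Π⁻¹‖ ≤ 1`, and `‖Π⁻¹ Ω̄‖ < 1`. -/
theorem berezin_contraction {n : ℕ} (Pi Om : Matrix (Fin n) (Fin n) ℂ)
    (h1 : Piᴴ * Pi - Omᴴ * Om = 1)
    (h2 : Pi * Piᴴ - Om.map (starRingEnd ℂ) * Omᵀ = 1) :
    IsUnit Pi ∧ ‖Matrix.toEuclideanCLM (𝕜 := ℂ) Pi⁻¹‖ ≤ 1 ∧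
      ‖Matrix.toEuclideanCLM (𝕜 := ℂ) (Pi⁻¹ * Om.map (starRingEnd ℂ))‖ < 1 := by
  have hpos : (Piᴴ * Pi).PosDef := by
    rw [sub_eq_iff_eq_add.mp h1]
    exact Matrix.PosDef.one.add_posSemidef (Matrix.posSemidef_conjTranspose_mul_self Om)
  have hU : IsUnit Pi := by
    have hdet := (Matrix.isUnit_iff_isUnit_det _).mp hpos.isUnit
    rw [Matrix.det_mul] at hdet
    exact (Matrix.isUnit_iff_isUnit_det _).mpr (isUnit_of_mul_isUnit_right hdet)
  have hdet : IsUnit Pi.det := (Matrix.isUnit_iff_isUnit_det _).mp hU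
  refine ⟨hU, ?_⟩
  set W : Matrix (Fin n) (Fin n) ℂ := Om.map (starRingEnd ℂ) with hW
  have hWT : Omᵀ = Wᴴ := by
    ext i j
    simp [hW]
  rw [hWT] at h2
  have hKT : (Pi⁻¹ * W) * (Pi⁻¹ * W)ᴴ + Pi⁻¹ * Pi⁻¹ᴴ = 1 := by
    have hW2 : W * Wᴴ + 1 = Pi * Piᴴ := by rw [← h2]; abel
    calc (Pi⁻¹ * W) * (Pi⁻¹ * W)ᴴ + Pi⁻¹ * Pi⁻¹ᴴ
        = Pi⁻¹ * (W * Wᴴ + 1) * Pi⁻¹ᴴ := by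
          rw [Matrix.conjTranspose_mul]; noncomm_ring
      _ = (Pi⁻¹ * Pi) * (Pi⁻¹ * Pi)ᴴ := by
          rw [hW2, Matrix.conjTranspose_mul]; noncomm_ring
      _ = 1 := by simp [Matrix.nonsing_inv_mul _ hdet]
  have hsq : ∀ (M : Matrix (Fin n) (Fin n) ℂ) (x : EuclideanSpace ℂ (Fin n)),
      ‖star (toEuclideanCLM (𝕜 := ℂ) M) x‖ ^ 2 =
        RCLike.re (inner ℂ (toEuclideanCLM (𝕜 := ℂ) (M * Mᴴ) x) x) := by
    intro M x
    rw [← Matrix.star_eq_conjTranspose, map_mul, map_star, ContinuousLinearMap.star_eq_adjoint,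
      mul_apply_eq_comp, ← ContinuousLinearMap.adjoint_inner_right,
      inner_self_eq_norm_sq]
  have key := contraction_of_sq_add_sq
    (star (toEuclideanCLM (𝕜 := ℂ) (Pi⁻¹ * W))) (star (toEuclideanCLM (𝕜 := ℂ) Pi⁻¹))
    (star (toEuclideanCLM (𝕜 := ℂ) Pi))
    (fun x => by
      rw [hsq, hsq, ← map_add, ← inner_add_left, ← _root_.add_apply, ← map_add, hKT, map_one,
        one_apply_eq_self, inner_self_eq_norm_sq])
    (fun x => by
      rw [← mul_apply_eq_comp, ← star_mul, ← map_mul,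
        Matrix.nonsing_inv_mul _ hdet, map_one, star_one, one_apply_eq_self])
  simpa only [ContinuousLinearMap.star_eq_adjoint, LinearIsometryEquiv.norm_map] using key
end

section
/- Let Π, Ω be n×n complex matrices satisfying ΠᴴΠ − ΩᴴΩ = 1 and ΠΠᴴ − conj(Ω)·Ωᵀ = 1, and let F₀, G₀ be n×n complex matrices such that G₀ is invertible and the operator norm of F₀·G₀⁻¹ on Euclidean ℂⁿ is at most 1. Then the matrix Π·G₀ + conj(Ω)·F₀ is invertible. -/
/-!
Put `K = F₀G₀⁻¹` and `W = conj Ω`. Then `ΠG₀ + WF₀ = (Π + WK)G₀`, so it suffices that the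
adjoint `Πᴴ + KᴴWᴴ` is injective. If it kills `x`, then `‖Πᴴx‖ = ‖KᴴWᴴx‖ ≤ ‖Wᴴx‖` since
`‖Kᴴ‖ = ‖K‖ ≤ 1`; but `ΠΠᴴ - WWᴴ = 1` gives `‖Πᴴx‖² = ‖Wᴴx‖² + ‖x‖²`, hence `x = 0`.
-/

open Matrix

/-- Injectivity of the adjoint of `p + wk`, from `‖p⋆x‖² = ‖w⋆x‖² + ‖x‖²` and `‖k⋆‖ ≤ 1`. -/
lemma eq_zero_of_star_add_mul_apply_eq_zero {E : Type*} [NormedAddCommGroup E]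
    [InnerProductSpace ℂ E] [CompleteSpace E] (p w k : E →L[ℂ] E)
    (h : p * star p - w * star w = 1) (hk : ‖k‖ ≤ 1) (x : E)
    (hx : star (p + w * k) x = 0) : x = 0 := by
  have hsq (a : E →L[ℂ] E) : inner ℂ ((a * star a) x) x = ((‖star a x‖ ^ 2 : ℝ) : ℂ) := by
    have := inner_self_eq_norm_sq_to_K (𝕜 := ℂ) (star a x)
    rw [ContinuousLinearMap.star_eq_adjoint] at this ⊢
    rw [ContinuousLinearMap.adjoint_inner_right] at this
    simpa using this
  have hnorm : ‖star p x‖ ^ 2 - ‖star w x‖ ^ 2 = ‖x‖ ^ 2 := by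
    have h3 : inner ℂ ((p * star p - w * star w) x) x = inner ℂ x x := by rw [h]; rfl
    rw [_root_.sub_apply, inner_sub_left, hsq, hsq, inner_self_eq_norm_sq_to_K] at h3
    exact Complex.ofReal_injective (by simpa using h3)
  have hle : ‖star p x‖ ≤ ‖star w x‖ := by
    have h4 : star p x = -(star k (star w x)) := by
      rw [star_add, star_mul] at hx
      exact eq_neg_of_add_eq_zero_left hx
    rw [h4, norm_neg]
    have h5 := (star k).le_opNorm (star w x)
    rw [norm_star] at h5
    exact h5.trans (mul_le_of_le_one_left (norm_nonneg _) hk)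
  have : ‖star p x‖ ^ 2 ≤ ‖star w x‖ ^ 2 := by gcongr
  have h0 : ‖x‖ ^ 2 = 0 := le_antisymm (by linarith) (sq_nonneg _)
  simpa using h0

/-- Preservation of germ axiom r6 in the proof of Lemma 4 of the paper: the
transformed germ matrix `ΠG₀ + Ω̄F₀` is invertible whenever `(Π, Ω)` satisfies the
canonical relations, `G₀` is invertible and `‖F₀G₀⁻¹‖ ≤ 1`. -/
theorem transformed_G_invertible {n : ℕ} (Pi Om F₀ G₀ : Matrix (Fin n) (Fin n) ℂ)
    (h1 : Piᴴ * Pi - Omᴴ * Om = 1)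
    (h2 : Pi * Piᴴ - Om.map (starRingEnd ℂ) * Omᵀ = 1)
    (hG₀ : IsUnit G₀)
    (hFG : ‖Matrix.toEuclideanCLM (𝕜 := ℂ) (F₀ * G₀⁻¹)‖ ≤ 1) :
    IsUnit (Pi * G₀ + Om.map (starRingEnd ℂ) * F₀) := by
  set W := Om.map (starRingEnd ℂ) with hW
  have hWs : Omᵀ = star W := by
    ext i j
    simp [hW, Matrix.star_apply]
  have hfac : Pi * G₀ + W * F₀ = (Pi + W * (F₀ * G₀⁻¹)) * G₀ := by
    rw [add_mul, Matrix.mul_assoc W, Matrix.mul_assoc F₀,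
      Matrix.nonsing_inv_mul _ ((Matrix.isUnit_iff_isUnit_det _).1 hG₀), Matrix.mul_one]
  rw [hfac]
  refine IsUnit.mul ?_ hG₀
  rw [← isUnit_star, ← Matrix.mulVec_injective_iff_isUnit]
  refine (injective_iff_map_eq_zero (Matrix.mulVecLin _)).2 fun v hv => ?_
  have key := eq_zero_of_star_add_mul_apply_eq_zero
    (Matrix.toEuclideanCLM (𝕜 := ℂ) Pi) (Matrix.toEuclideanCLM (𝕜 := ℂ) W)
    (Matrix.toEuclideanCLM (𝕜 := ℂ) (F₀ * G₀⁻¹))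
    (by
      rw [← map_star, ← map_star, ← map_mul, ← map_mul, ← map_sub, ← hWs]
      exact (congrArg _ h2).trans (map_one _)) hFG (WithLp.toLp 2 v)
    (by
      rw [← map_mul, ← map_add, ← map_star, Matrix.toEuclideanCLM_toLp]
      exact congrArg (WithLp.toLp 2) hv)
  simpa using key
end
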